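/- arXiv:1609.05388 — 3 statements merged into one kernel-verified Lean document; each statement's English description precedes it below -/
import Mathlib

section
/- Johnson–Lindenstrauss lemma (existential form): there exists a universal constant C > 0 such that for every n ≥ 2, every d ≥ 1, every finite set X ⊆ ℝ^d with |X| = n, and every real ε with 0 < ε < 1/2, setting m = ⌈C · ε⁻² · log n⌉ there exists a linear map f : ℝ^d → ℝ^m such that for all x, y ∈ X, (1 − ε)·‖x − y‖² ≤ ‖f(x) − f(y)‖² ≤ (1 + ε)·‖x − y‖². -/
/-!
The linear map is `m ^ (-1/2)` times a suitable `m × d` matrix of signs, found by the probabilistic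
method. Expectations over independent uniform signs are finite sums over `Fin d → Bool` (or over
`Fin m → Fin d → Bool` for the whole matrix), so no probability space on matrices is needed.

Fix a unit vector `a` and let `S = ∑ i, ± a i` be one coordinate of the image. Then `E S² = 1`
(`sum_radSum_sq`), and `S` is subgaussian (`sum_exp_radSum_le`). Writing `exp (S² / 4)` as a
Gaussian average of `exp (S g / √2)` and exchanging the two averages bounds `E exp (S² / 4)` by an
absolute constant, the Gaussian integral `gaussSq` (`sum_exp_sq_radSum_le`). A second-order Taylor
estimate then yields `E exp (t (S² - 1)) ≤ exp (K t²)` for `|t| ≤ 1 / 8` and an absolute constant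
`K = jlK` (`sum_exp_centered_le`), and over `m` independent rows the bound is raised to the power
`m` (`sum_exp_rows_le`).

Chernoff's bound with `t = ε / (2 K)` and a union bound over the at most `n²` normalized
differences finish the proof: the failure probability is at most `2 n² exp (-m ε² / (4 K))`, which
is at most `2 n⁻² < 1` as soon as `m ≥ 16 K ε⁻² log n`.
-/

open MeasureTheory ProbabilityTheory

/-- The sign `±1` encoded by a Boolean. -/
noncomputable def radSign (b : Bool) : ℝ := if b then 1 else -1

/-- The Rademacher sum `∑ i, ± a i`, with the signs given by `σ`. -/
noncomputable def radSum {d : ℕ} (a : Fin d → ℝ) (σ : Fin d → Bool) : ℝ :=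
  ∑ i, radSign (σ i) * a i

lemma sum_bool_cons {d : ℕ} (F : (Fin (d + 1) → Bool) → ℝ) :
    ∑ σ, F σ = ∑ τ : Fin d → Bool, (F (Fin.cons true τ) + F (Fin.cons false τ)) := by
  rw [← (Fin.consEquiv (fun _ : Fin (d + 1) => Bool)).sum_comp, Fintype.sum_prod_type,
    Fintype.sum_bool, Finset.sum_add_distrib]
  rfl

lemma radSum_cons {d : ℕ} (a : Fin (d + 1) → ℝ) (b : Bool) (τ : Fin d → Bool) :
    radSum a (Fin.cons b τ) = radSign b * a 0 + radSum (fun i => a i.succ) τ := by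
  simp [radSum, Fin.sum_univ_succ]

/-- `E S² = ‖a‖²`: the cross terms cancel. -/
lemma sum_radSum_sq {d : ℕ} (a : Fin d → ℝ) :
    ∑ σ, radSum a σ ^ 2 = 2 ^ d * ∑ i, a i ^ 2 := by
  induction d with
  | zero => simp [radSum]
  | succ d ih =>
    rw [sum_bool_cons, Fin.sum_univ_succ]
    have h : ∀ τ : Fin d → Bool, radSum a (Fin.cons true τ) ^ 2 + radSum a (Fin.cons false τ) ^ 2
        = 2 * a 0 ^ 2 + 2 * radSum (fun i => a i.succ) τ ^ 2 := by
      intro τ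
      simp only [radSum_cons, radSign]
      norm_num
      ring
    simp only [h, Finset.sum_add_distrib, ← Finset.mul_sum, ih]
    simp
    ring

/-- A Rademacher sum is subgaussian, because `cosh y ≤ exp (y² / 2)`. -/
lemma sum_exp_radSum_le {d : ℕ} (a : Fin d → ℝ) (x : ℝ) :
    ∑ σ, Real.exp (x * radSum a σ) ≤ 2 ^ d * Real.exp (x ^ 2 * (∑ i, a i ^ 2) / 2) := by
  induction d with
  | zero => simp [radSum]
  | succ d ih =>
    rw [sum_bool_cons, Fin.sum_univ_succ]
    have h : ∀ τ : Fin d → Bool,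
        Real.exp (x * radSum a (Fin.cons true τ)) + Real.exp (x * radSum a (Fin.cons false τ))
        = 2 * Real.cosh (x * a 0) * Real.exp (x * radSum (fun i => a i.succ) τ) := by
      intro τ
      rw [Real.cosh_eq, radSum_cons, radSum_cons, mul_add, mul_add, Real.exp_add, Real.exp_add]
      simp [radSign]
      ring
    simp only [h, ← Finset.mul_sum]
    calc _ ≤ 2 * Real.exp ((x * a 0) ^ 2 / 2) *
          (2 ^ d * Real.exp (x ^ 2 * (∑ i : Fin d, a i.succ ^ 2) / 2)) := by
          gcongr
          · exact Real.cosh_le_exp_half_sq _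
          · exact ih _
      _ = _ := by
          rw [show x ^ 2 * (a 0 ^ 2 + ∑ i : Fin d, a i.succ ^ 2) / 2 = (x * a 0) ^ 2 / 2 +
            x ^ 2 * (∑ i : Fin d, a i.succ ^ 2) / 2 by ring, Real.exp_add]
          ring

lemma integrable_exp_sq_gaussian :
    Integrable (fun g : ℝ => Real.exp (g ^ 2 / 4)) (gaussianReal 0 1) := by
  rw [gaussianReal_of_var_ne_zero _ one_ne_zero,
    integrable_withDensity_iff_integrable_smul' (measurable_gaussianPDF _ _)
      (by simp [gaussianPDF])]
  have h := (integrable_exp_neg_mul_sq (b := 1 / 4) (by norm_num)).const_mul (√(2 * Real.pi))⁻¹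
  refine h.congr (Filter.Eventually.of_forall fun g => ?_)
  simp only [gaussianPDF, gaussianPDFReal, smul_eq_mul]
  rw [ENNReal.toReal_ofReal (by positivity), mul_assoc, ← Real.exp_add]
  simp only [NNReal.coe_one, mul_one, sub_zero]
  ring_nf

/-- The absolute constant `E exp (g² / 4)`, for `g` a standard Gaussian. -/
noncomputable def gaussSq : ℝ := ∫ g, Real.exp (g ^ 2 / 4) ∂(gaussianReal 0 1)

lemma gaussSq_nonneg : 0 ≤ gaussSq := integral_nonneg fun _ => (Real.exp_pos _).le

/-- The Gaussian moment generating function linearizes the square in the exponent. -/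
lemma exp_sq_eq_integral (s : ℝ) :
    Real.exp (s ^ 2 / 4) = ∫ g, Real.exp (s / √2 * g) ∂(gaussianReal 0 1) := by
  have h := congrFun (mgf_id_gaussianReal (μ := 0) (v := 1)) (s / √2)
  simp only [mgf, id] at h
  rw [h, div_pow, Real.sq_sqrt (by norm_num)]
  simp
  ring

/-- `E exp (S² / 4)` is at most its Gaussian counterpart: after linearizing the square, the sign
average is taken first and is controlled by the subgaussian bound. -/
lemma sum_exp_sq_radSum_le {d : ℕ} (a : Fin d → ℝ) (ha : ∑ i, a i ^ 2 = 1) :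
    ∑ σ, Real.exp (radSum a σ ^ 2 / 4) ≤ 2 ^ d * gaussSq := by
  simp only [exp_sq_eq_integral (radSum a _)]
  rw [← integral_finsetSum _ (fun σ _ => integrable_exp_mul_gaussianReal _), gaussSq,
    ← integral_const_mul]
  refine integral_mono (integrable_finsetSum _ fun σ _ => integrable_exp_mul_gaussianReal _)
    (integrable_exp_sq_gaussian.const_mul _) fun g => ?_
  have h := sum_exp_radSum_le a (g / √2)
  rw [ha, div_pow, Real.sq_sqrt (by norm_num)] at h
  have h4 : g ^ 2 / 2 * 1 / 2 = g ^ 2 / 4 := by ring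
  rw [h4] at h
  refine le_of_eq_of_le (Finset.sum_congr rfl fun σ _ => ?_) h
  congr 1
  ring

/-- Taylor estimate of `exp (t (s² - 1))` to first order in `t`. The remainder
`(t z)² exp |t z|`, `z = s² - 1`, is at most a multiple of `t² exp (s² / 4)`. -/
lemma exp_mul_le (s t : ℝ) (ht : |t| ≤ 1 / 8) :
    Real.exp (t * (s ^ 2 - 1)) ≤
      1 + t * (s ^ 2 - 1) + 256 * t ^ 2 * Real.exp (s ^ 2 / 4) := by
  set z := s ^ 2 - 1 with hz
  have h1 : Real.exp (t * z) ≤ 1 + t * z + (t * z) ^ 2 * Real.exp |t * z| := by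
    generalize t * z = w
    have h : ‖((Real.exp w - (1 + w) : ℝ) : ℂ)‖ ≤ w ^ 2 * Real.exp |w| := by
      simpa [Finset.sum_range_succ] using Complex.norm_exp_sub_sum_le_norm_mul_exp (w : ℂ) 2
    rw [Complex.norm_real, Real.norm_eq_abs] at h
    linarith [(abs_le.mp h).2]
  have h2 : |t * z| ≤ |z| / 8 := by
    rw [abs_mul]; nlinarith [abs_nonneg z]
  have h3 : z ^ 2 ≤ 128 * Real.exp (|z| / 8) := by
    have := Real.quadratic_le_exp_of_nonneg (x := |z| / 8) (by positivity)
    nlinarith [sq_abs z, abs_nonneg z]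
  have h4 : Real.exp (|z| / 8) * Real.exp (|z| / 8) ≤ 2 * Real.exp (s ^ 2 / 4) := by
    have hz' : |z| ≤ s ^ 2 + 1 := abs_le.mpr ⟨by nlinarith [sq_nonneg s], by linarith⟩
    have h5 : Real.exp (1 / 4) ≤ 2 := by
      rw [← Real.le_log_iff_exp_le (by norm_num)]
      linarith [Real.log_two_gt_d9]
    calc _ = Real.exp (|z| / 4) := by rw [← Real.exp_add]; ring_nf
      _ ≤ Real.exp (1 / 4 + s ^ 2 / 4) := by gcongr; linarith
      _ ≤ _ := by rw [Real.exp_add]; gcongr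
  calc _ ≤ 1 + t * z + (t * z) ^ 2 * Real.exp |t * z| := h1
    _ ≤ 1 + t * z + t ^ 2 * (128 * Real.exp (|z| / 8)) * Real.exp (|z| / 8) := by
      rw [mul_pow]; gcongr
    _ = 1 + t * z + 128 * t ^ 2 * (Real.exp (|z| / 8) * Real.exp (|z| / 8)) := by ring
    _ ≤ 1 + t * z + 128 * t ^ 2 * (2 * Real.exp (s ^ 2 / 4)) := by gcongr
    _ = _ := by ring

/-- The absolute constant `K` in `E exp (t (S² - 1)) ≤ exp (K t²)`. -/
noncomputable def jlK : ℝ := 256 * (gaussSq + 1)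

lemma jlK_ge : 256 ≤ jlK := by unfold jlK; linarith [gaussSq_nonneg]

/-- The centred square `S² - 1` has a subgaussian moment generating function near `0`; the linear
term of the Taylor estimate vanishes on average. -/
lemma sum_exp_centered_le {d : ℕ} (a : Fin d → ℝ) (ha : ∑ i, a i ^ 2 = 1) (t : ℝ)
    (ht : |t| ≤ 1 / 8) :
    ∑ σ, Real.exp (t * (radSum a σ ^ 2 - 1)) ≤ 2 ^ d * Real.exp (jlK * t ^ 2) := by
  calc _ ≤ ∑ σ, (1 + t * (radSum a σ ^ 2 - 1)
          + 256 * t ^ 2 * Real.exp (radSum a σ ^ 2 / 4)) :=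
        Finset.sum_le_sum fun σ _ => exp_mul_le _ _ ht
    _ = 2 ^ d + 256 * t ^ 2 * ∑ σ, Real.exp (radSum a σ ^ 2 / 4) := by
        rw [Finset.sum_add_distrib, Finset.sum_add_distrib, ← Finset.mul_sum, ← Finset.mul_sum,
          Finset.sum_sub_distrib, sum_radSum_sq, ha]
        simp
    _ ≤ 2 ^ d + 256 * t ^ 2 * (2 ^ d * gaussSq) := by
        gcongr; exact sum_exp_sq_radSum_le a ha
    _ ≤ 2 ^ d * (jlK * t ^ 2 + 1) := by
        have : 0 ≤ (2 : ℝ) ^ d * t ^ 2 := by positivity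
        unfold jlK; nlinarith
    _ ≤ _ := by gcongr; exact Real.add_one_le_exp _

/-- The rows of a random sign matrix are independent, so the one-row bound is raised to the power
`m`. -/
lemma sum_exp_rows_le {m d : ℕ} (a : Fin d → ℝ) (ha : ∑ i, a i ^ 2 = 1) (t : ℝ)
    (ht : |t| ≤ 1 / 8) :
    ∑ M : Fin m → Fin d → Bool, Real.exp (t * ∑ j, (radSum a (M j) ^ 2 - 1)) ≤
      (2 ^ d) ^ m * Real.exp (m * (jlK * t ^ 2)) := by
  simp only [Finset.mul_sum, Real.exp_sum]
  rw [← Fintype.sum_pow (fun σ => Real.exp (t * (radSum a σ ^ 2 - 1))), Real.exp_nat_mul, ← mul_pow]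
  gcongr
  exact sum_exp_centered_le a ha t ht

/-- Chernoff and union bounds: if the failure probability is below `1`, some sign matrix nearly
preserves, up to the factor `m`, the squared norm of every unit vector in `V`. -/
lemma exists_good_matrix {m d : ℕ} (V : Finset (Fin d → ℝ)) (hV : ∀ a ∈ V, ∑ i, a i ^ 2 = 1)
    (ε : ℝ) (hε0 : 0 < ε) (hε : ε < 1 / 2)
    (hm : 2 * V.card * Real.exp (-(m * ε ^ 2 / (4 * jlK))) < 1) :
    ∃ M : Fin m → Fin d → Bool, ∀ a ∈ V, |∑ j, (radSum a (M j) ^ 2 - 1)| ≤ m * ε := by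
  have hK := jlK_ge
  set t := ε / (2 * jlK) with htdef
  have ht0 : 0 < t := by positivity
  have ht : |t| ≤ 1 / 8 := by
    rw [abs_of_pos ht0, htdef, div_le_iff₀ (by positivity)]; linarith
  set Z : (Fin m → Fin d → Bool) → (Fin d → ℝ) → ℝ := fun M a => ∑ j, (radSum a (M j) ^ 2 - 1)
  -- The total of the exponential moments is below the total of the thresholds `exp (t m ε)`, so
  -- some single matrix is below its threshold for all vectors and both tails at once.
  have key : ∑ M : Fin m → Fin d → Bool, ∑ a ∈ V,
      (Real.exp (t * Z M a) + Real.exp (-t * Z M a)) <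
      ∑ M : Fin m → Fin d → Bool, Real.exp (t * (m * ε)) := by
    rw [Finset.sum_comm]
    calc _ ≤ ∑ a ∈ V, 2 * ((2 ^ d) ^ m * Real.exp (m * (jlK * t ^ 2))) := by
          refine Finset.sum_le_sum fun a ha => ?_
          rw [Finset.sum_add_distrib, two_mul]
          refine add_le_add (sum_exp_rows_le a (hV a ha) t ht) ?_
          have := sum_exp_rows_le (m := m) a (hV a ha) (-t) (by rwa [abs_neg])
          rwa [neg_sq] at this
      _ = ((2 ^ d) ^ m * Real.exp (t * (m * ε))) *
          (2 * V.card * Real.exp (-(m * ε ^ 2 / (4 * jlK)))) := by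
          have : (m * (jlK * t ^ 2) : ℝ) = t * (m * ε) + -(m * ε ^ 2 / (4 * jlK)) := by
            rw [htdef]; field_simp; ring
          rw [this, Real.exp_add, Finset.sum_const, nsmul_eq_mul]
          ring
      _ < (2 ^ d) ^ m * Real.exp (t * (m * ε)) := mul_lt_of_lt_one_right (by positivity) hm
      _ = _ := by simp
  obtain ⟨M, -, hM⟩ := Finset.exists_lt_of_sum_lt key
  refine ⟨M, fun a ha => ?_⟩
  have h1 : Real.exp (t * Z M a) + Real.exp (-t * Z M a) < Real.exp (t * (m * ε)) :=
    (Finset.single_le_sum (f := fun a => Real.exp (t * Z M a) + Real.exp (-t * Z M a))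
      (fun _ _ => by positivity) ha).trans_lt hM
  have h2 : t * Z M a < t * (m * ε) :=
    Real.exp_lt_exp.mp (by linarith [Real.exp_pos (-t * Z M a)])
  have h3 : -t * Z M a < t * (m * ε) :=
    Real.exp_lt_exp.mp (by linarith [Real.exp_pos (t * Z M a)])
  rw [abs_le]
  constructor <;> nlinarith

/-- The linear map `m ^ (-1/2) M` of a sign matrix `M`. -/
noncomputable def jlMap {m d : ℕ} (M : Fin m → Fin d → Bool) :
    EuclideanSpace ℝ (Fin d) →ₗ[ℝ] EuclideanSpace ℝ (Fin m) :=
  (√m)⁻¹ • Matrix.toLpLin 2 2 (Matrix.of fun j i => radSign (M j i))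

lemma norm_jlMap_sq {m d : ℕ} (M : Fin m → Fin d → Bool) (v : EuclideanSpace ℝ (Fin d)) :
    ‖jlMap M v‖ ^ 2 = (m : ℝ)⁻¹ * ∑ j, radSum v (M j) ^ 2 := by
  rw [jlMap, LinearMap.smul_apply, norm_smul, mul_pow, EuclideanSpace.norm_sq_eq]
  simp [Matrix.mulVec, dotProduct, radSum, Matrix.toLpLin_apply]

lemma radSum_smul {d : ℕ} (c : ℝ) (a : Fin d → ℝ) (σ : Fin d → Bool) :
    radSum (c • a) σ = c * radSum a σ := by
  simp only [radSum, Finset.mul_sum, Pi.smul_apply, smul_eq_mul]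
  exact Finset.sum_congr rfl fun i _ => by ring


/-- **Johnson–Lindenstrauss lemma (existential form).**
There exists a universal constant `C > 0` such that for every `n ≥ 2`, every `d ≥ 1`,
every finite set `X ⊆ ℝ^d` with `|X| = n`, and every `0 < ε < 1/2`, setting
`m = ⌈C · ε⁻² · log n⌉` there exists a linear map `f : ℝ^d → ℝ^m` such that
for all `x, y ∈ X`, `(1 − ε)·‖x − y‖² ≤ ‖f x − f y‖² ≤ (1 + ε)·‖x − y‖²`. -/
theorem stmt_0 :
    ∃ C : ℝ, 0 < C ∧
      ∀ (n d : ℕ), 2 ≤ n → 1 ≤ d →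
        ∀ X : Finset (EuclideanSpace ℝ (Fin d)), X.card = n →
          ∀ ε : ℝ, 0 < ε → ε < 1 / 2 →
            ∃ f : EuclideanSpace ℝ (Fin d) →ₗ[ℝ]
                EuclideanSpace ℝ (Fin ⌈C * ε⁻¹ ^ 2 * Real.log n⌉₊),
              ∀ x ∈ X, ∀ y ∈ X,
                (1 - ε) * ‖x - y‖ ^ 2 ≤ ‖f x - f y‖ ^ 2 ∧
                  ‖f x - f y‖ ^ 2 ≤ (1 + ε) * ‖x - y‖ ^ 2 := by
  classical
  have hK := jlK_ge
  refine ⟨16 * jlK, by positivity, fun n d hn _ X hX ε hε0 hε => ?_⟩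
  have hn' : (2 : ℝ) ≤ n := by exact_mod_cast hn
  have hlog : 0 < Real.log n := Real.log_pos (by linarith)
  set m := ⌈16 * jlK * ε⁻¹ ^ 2 * Real.log n⌉₊ with hmdef
  have hm : 16 * jlK * ε⁻¹ ^ 2 * Real.log n ≤ m := Nat.le_ceil _
  have hm0 : (0 : ℝ) < m := lt_of_lt_of_le (by positivity) hm
  -- The normalized differences of distinct points of `X`.
  let V : Finset (Fin d → ℝ) :=
    (X ×ˢ X).filter (fun p => p.1 ≠ p.2) |>.image
      fun p : EuclideanSpace ℝ (Fin d) × EuclideanSpace ℝ (Fin d) => ‖p.1 - p.2‖⁻¹ • (⇑(p.1 - p.2) : Fin d → ℝ)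
  have hVcard : (V.card : ℝ) ≤ n ^ 2 := by
    have : V.card ≤ n ^ 2 := calc
      _ ≤ _ := Finset.card_image_le
      _ ≤ _ := Finset.card_filter_le _ _
      _ = n ^ 2 := by rw [Finset.card_product, hX, sq]
    exact_mod_cast this
  have hV : ∀ a ∈ V, ∑ i, a i ^ 2 = 1 := by
    intro a ha
    obtain ⟨p, hp, rfl⟩ := Finset.mem_image.mp ha
    have hne : ‖p.1 - p.2‖ ≠ 0 := norm_ne_zero_iff.mpr (sub_ne_zero.mpr (Finset.mem_filter.mp hp).2)
    simp only [Pi.smul_apply, smul_eq_mul, mul_pow, ← Finset.mul_sum]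
    rw [← EuclideanSpace.real_norm_sq_eq, inv_pow, inv_mul_cancel₀ (pow_ne_zero 2 hne)]
  have hbound : 2 * V.card * Real.exp (-(m * ε ^ 2 / (4 * jlK))) < 1 := by
    have h1 : 4 * Real.log n ≤ m * ε ^ 2 / (4 * jlK) := by
      rw [le_div_iff₀ (by positivity)]
      calc 4 * Real.log n * (4 * jlK) = (16 * jlK * ε⁻¹ ^ 2 * Real.log n) * ε ^ 2 := by
            field_simp; ring
        _ ≤ _ := by gcongr
    have h2 : Real.exp (-(m * ε ^ 2 / (4 * jlK))) ≤ ((n : ℝ) ^ 4)⁻¹ := by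
      rw [Real.exp_neg]
      refine inv_anti₀ (by positivity) ?_
      calc (n : ℝ) ^ 4 = Real.exp (4 * Real.log n) := by
            rw [← Real.exp_log (show (0 : ℝ) < n by linarith), ← Real.exp_nat_mul]; simp
        _ ≤ _ := Real.exp_le_exp.mpr h1
    calc _ ≤ 2 * (n : ℝ) ^ 2 * ((n : ℝ) ^ 4)⁻¹ := by gcongr
      _ = 2 / (n : ℝ) ^ 2 := by field_simp
      _ < 1 := by rw [div_lt_one (by positivity)]; nlinarith
  obtain ⟨M, hM⟩ := exists_good_matrix (m := m) V hV ε hε0 hε hbound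
  refine ⟨jlMap M, fun x hx y hy => ?_⟩
  rw [← map_sub]
  rcases eq_or_ne x y with rfl | hxy
  · simp
  set r := ‖x - y‖ with hr
  have hr0 : 0 < r := norm_pos_iff.mpr (sub_ne_zero.mpr hxy)
  set u : Fin d → ℝ := r⁻¹ • (⇑(x - y) : Fin d → ℝ) with hu
  have huV : u ∈ V := Finset.mem_image.mpr
    ⟨(x, y), Finset.mem_filter.mpr ⟨Finset.mk_mem_product hx hy, hxy⟩, rfl⟩
  have hZ := abs_le.mp (hM u huV)
  have hxyu : (⇑(x - y) : Fin d → ℝ) = r • u := by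
    rw [hu, smul_smul, mul_inv_cancel₀ hr0.ne', one_smul]
  have hnorm : ‖jlMap M (x - y)‖ ^ 2 = r ^ 2 * ((m : ℝ)⁻¹ * ∑ j, radSum u (M j) ^ 2) := by
    rw [norm_jlMap_sq, hxyu]
    simp only [radSum_smul, mul_pow, ← Finset.mul_sum]
    ring
  simp only [Finset.sum_sub_distrib, Finset.sum_const, Finset.card_univ, Fintype.card_fin,
    nsmul_eq_mul, mul_one] at hZ
  rw [hnorm, mul_comm (1 - ε), mul_comm (1 + ε), inv_mul_eq_div]
  constructor
  · gcongr
    rw [le_div_iff₀ hm0]; linarith [hZ.1]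
  · gcongr
    rw [div_le_iff₀ hm0]; linarith [hZ.2]
end

section
/- Constructive Johnson–Lindenstrauss lemma (Achlioptas sign-matrix version): there exists a universal constant C > 0 such that the following holds. Let T ⊆ ℝ^d be a finite set with |T| ≥ 2, let 0 < δ < 1 and 0 < γ < 1, and let k be a natural number with k ≥ C · δ⁻² · log(|T|/γ). Let S ∈ ℝ^{k×d} be a random matrix whose entries are independent and uniformly distributed on {−1/√k, +1/√k}. Then with probability at least 1 − γ over the choice of S, for all x, y ∈ T, (1 − δ)·‖x − y‖ ≤ ‖S(x − y)‖ ≤ (1 + δ)·‖x − y‖. -/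
/-!
For a single row of signs `ε` and a vector `u` with `U = ∑ u_j²`, the key estimate is
`E exp (a (s + ⟨ε, u⟩)²) ≤ exp ((a + 8 a² U) (U + s²))`, valid for real `a` of either sign with
`8 |a| U ≤ 1`. It follows by induction on the dimension: averaging over one sign and using
`cosh y ≤ exp (y² / 2)` replaces the coefficient `b` of `s²` by `b + 2 b² w²`, where `w` is the
corresponding coordinate, and `b` never exceeds `2 |a|` in absolute value along the way.

Taking `s = 0` and `a = ± δ / (16 U)`, the rows being independent, the Chernoff bound shows that
each of the two tails of `‖S v‖² / ‖v‖²` beyond `1 ± δ` has probability at most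
`exp (- k δ² / 32)`. Since `(1 + δ)² ≥ 1 + δ` and `(1 - δ)² ≤ 1 - δ`, this controls the distortion
of norms. A union bound over the at most `|T|²` ordered pairs, with
`2 |T|² / γ ≤ (|T| / γ)³`, gives the result with `C = 96`.
-/

open scoped BigOperators
open Classical

/-- Euclidean (ℓ₂) norm of a vector in `ℝ^n` given as `Fin n → ℝ`. -/
noncomputable def euclNorm {n : ℕ} (v : Fin n → ℝ) : ℝ :=
  Real.sqrt (∑ i, v i ^ 2)

/-- The `k × d` random sign matrix determined by the Boolean choices `σ`:
entry `(i,j)` equals `1/√k` if `σ i j` is true and `-1/√k` otherwise. -/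
noncomputable def signMatrix {k d : ℕ} (σ : Fin k → Fin d → Bool) :
    Matrix (Fin k) (Fin d) ℝ :=
  Matrix.of fun i j => if σ i j then (1 / Real.sqrt k) else -(1 / Real.sqrt k)

/-- The inner product of `u` with the vector of signs encoded by `τ` (`true` is `+1`). -/
noncomputable def signSum {d : ℕ} (u : Fin d → ℝ) (τ : Fin d → Bool) : ℝ :=
  ∑ j, (if τ j then 1 else -1) * u j

/-- Averaging over one sign: the inductive step of the sub-Gaussian square estimate. -/
lemma exp_two_point {a U s w : ℝ} (hU : 0 ≤ U) (h : 8 * |a| * (w ^ 2 + U) ≤ 1) :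
    Real.exp ((a + 8 * a ^ 2 * U) * (U + (s + w) ^ 2)) +
      Real.exp ((a + 8 * a ^ 2 * U) * (U + (s - w) ^ 2)) ≤
    2 * Real.exp ((a + 8 * a ^ 2 * (w ^ 2 + U)) * (w ^ 2 + U + s ^ 2)) := by
  set b := a + 8 * a ^ 2 * U with hb
  have hbabs : |b| ≤ |2 * a| := by
    have h1 : |b| ≤ |a| + |8 * a ^ 2 * U| := abs_add_le _ _
    have h2 : |8 * a ^ 2 * U| = |a| * (8 * |a| * U) := by
      rw [abs_of_nonneg (by positivity), ← sq_abs a]; ring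
    have h3 : 8 * |a| * U ≤ 1 := by
      have : 0 ≤ |a| * w ^ 2 := by positivity
      nlinarith
    have h4 : |a| * (8 * |a| * U) ≤ |a| * 1 := mul_le_mul_of_nonneg_left h3 (abs_nonneg _)
    rw [abs_mul, abs_two]
    linarith
  have hb2 : b ^ 2 ≤ (2 * a) ^ 2 := sq_le_sq.mpr hbabs
  have e1 : b * (U + (s + w) ^ 2) = b * (U + s ^ 2 + w ^ 2) + 2 * b * s * w := by ring
  have e2 : b * (U + (s - w) ^ 2) = b * (U + s ^ 2 + w ^ 2) + -(2 * b * s * w) := by ring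
  have hc := Real.cosh_le_exp_half_sq (2 * b * s * w)
  rw [Real.cosh_eq] at hc
  rw [e1, e2, Real.exp_add, Real.exp_add]
  calc _ = 2 * (Real.exp (b * (U + s ^ 2 + w ^ 2)) *
        ((Real.exp (2 * b * s * w) + Real.exp (-(2 * b * s * w))) / 2)) := by ring
    _ ≤ 2 * (Real.exp (b * (U + s ^ 2 + w ^ 2)) * Real.exp ((2 * b * s * w) ^ 2 / 2)) := by
        gcongr
    _ ≤ _ := by
        rw [← Real.exp_add]
        gcongr
        have h5 : 0 ≤ a ^ 2 * w ^ 2 * (w ^ 2 + U) := by positivity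
        have h6 : b ^ 2 * (s ^ 2 * w ^ 2) ≤ (2 * a) ^ 2 * (s ^ 2 * w ^ 2) := by gcongr
        have h7 : (a + 8 * a ^ 2 * (w ^ 2 + U)) = b + 8 * a ^ 2 * w ^ 2 := by rw [hb]; ring
        rw [h7]
        nlinarith

/-- Bound on the exponential moment of the square of a shifted Rademacher sum, for a parameter `a`
of either sign. The shift `s` makes induction on the dimension possible. -/
lemma sum_exp_signSum_le (a : ℝ) : ∀ (d : ℕ) (u : Fin d → ℝ) (s : ℝ),
    8 * |a| * (∑ j, u j ^ 2) ≤ 1 →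
    ∑ τ : Fin d → Bool, Real.exp (a * (s + signSum u τ) ^ 2) ≤
      2 ^ d * Real.exp ((a + 8 * a ^ 2 * ∑ j, u j ^ 2) * (∑ j, u j ^ 2 + s ^ 2)) := by
  intro d
  induction d with
  | zero => intro u s _; simp [signSum]
  | succ d ih =>
    intro u s h
    have hU : 0 ≤ ∑ j : Fin d, u j.succ ^ 2 := Finset.sum_nonneg fun _ _ => sq_nonneg _
    rw [Fin.sum_univ_succ] at h ⊢
    have h' : 8 * |a| * (∑ j : Fin d, u j.succ ^ 2) ≤ 1 := by
      have : 0 ≤ |a| * u 0 ^ 2 := by positivity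
      nlinarith
    have hsplit : ∑ τ : Fin (d + 1) → Bool, Real.exp (a * (s + signSum u τ) ^ 2) =
        ∑ τ : Fin d → Bool, Real.exp (a * (s + u 0 + signSum (fun j => u j.succ) τ) ^ 2) +
        ∑ τ : Fin d → Bool, Real.exp (a * (s - u 0 + signSum (fun j => u j.succ) τ) ^ 2) := by
      rw [← (Fin.consEquiv (fun _ : Fin (d + 1) => Bool)).sum_comp, Fintype.sum_prod_type,
        Fintype.sum_bool]
      congr 1 <;> refine Finset.sum_congr rfl fun τ _ => ?_ <;>
        simp [signSum, Fin.sum_univ_succ, Fin.consEquiv] <;> ring_nf <;> simp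
    rw [hsplit]
    have i1 := ih (fun j => u j.succ) (s + u 0) h'
    have i2 := ih (fun j => u j.succ) (s - u 0) h'
    have i3 := exp_two_point (s := s) hU h
    have hp : (0 : ℝ) ≤ 2 ^ d := by positivity
    have i4 := mul_le_mul_of_nonneg_left i3 hp
    rw [mul_add] at i4
    calc _ ≤ _ := add_le_add i1 i2
      _ ≤ _ := i4
      _ = _ := by rw [pow_succ]; ring

/-- Exponential moment of `∑ i, ⟨ε_i, u⟩²` over `k` independent rows of signs. -/
lemma sum_exp_rows_le_s1 (k d : ℕ) (u : Fin d → ℝ) (t : ℝ) (hU : 0 < ∑ j, u j ^ 2)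
    (ht : 8 * |t| ≤ 1) :
    ∑ σ : Fin k → Fin d → Bool,
        Real.exp (t * ((∑ i, signSum u (σ i) ^ 2) / ∑ j, u j ^ 2)) ≤
      2 ^ (k * d) * Real.exp (k * (t + 8 * t ^ 2)) := by
  set U := ∑ j, u j ^ 2 with hUdef
  have h1 := sum_exp_signSum_le (t / U) d u 0 (by
    rw [← hUdef, abs_div, abs_of_pos hU]
    have : 8 * (|t| / U) * U = 8 * |t| := by field_simp
    linarith)
  rw [← hUdef] at h1
  have e : (t / U + 8 * (t / U) ^ 2 * U) * (U + 0 ^ 2) = t + 8 * t ^ 2 := by field_simp; ring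
  rw [e] at h1
  have h2 : ∑ σ : Fin k → Fin d → Bool, Real.exp (t * ((∑ i, signSum u (σ i) ^ 2) / U)) =
      (∑ τ : Fin d → Bool, Real.exp (t / U * (0 + signSum u τ) ^ 2)) ^ k := by
    rw [Fintype.sum_pow]
    refine Finset.sum_congr rfl fun σ _ => ?_
    rw [← Real.exp_sum, ← Finset.mul_sum]
    congr 1
    simp only [zero_add]
    ring
  rw [h2]
  calc _ ≤ (2 ^ d * Real.exp (t + 8 * t ^ 2)) ^ k :=
        pow_le_pow_left₀ (Finset.sum_nonneg fun _ _ => (Real.exp_pos _).le) h1 k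
    _ = _ := by rw [mul_pow, ← pow_mul, mul_comm d k, Real.exp_nat_mul]

lemma euclNorm_sq {n : ℕ} (v : Fin n → ℝ) : euclNorm v ^ 2 = ∑ i, v i ^ 2 :=
  Real.sq_sqrt (Finset.sum_nonneg fun _ _ => sq_nonneg _)

lemma euclNorm_nonneg {n : ℕ} (v : Fin n → ℝ) : 0 ≤ euclNorm v := Real.sqrt_nonneg _

lemma euclNorm_signMatrix_sq {k d : ℕ} (σ : Fin k → Fin d → Bool) (v : Fin d → ℝ) :
    euclNorm ((signMatrix σ).mulVec v) ^ 2 = (∑ i, signSum v (σ i) ^ 2) / k := by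
  rw [euclNorm_sq, Finset.sum_div]
  refine Finset.sum_congr rfl fun i _ => ?_
  have : (signMatrix σ).mulVec v i = (1 / Real.sqrt k) * signSum v (σ i) := by
    simp only [Matrix.mulVec, dotProduct, signMatrix, Matrix.of_apply, signSum, Finset.mul_sum]
    refine Finset.sum_congr rfl fun j _ => ?_
    split_ifs <;> ring
  rw [this, mul_pow, div_pow, Real.sq_sqrt (Nat.cast_nonneg k)]
  ring

/-- The sign patterns whose matrix distorts the norm of `v` by more than `δ` are few. -/
lemma card_bad_le {k d : ℕ} (hk : 0 < k) (v : Fin d → ℝ) {δ : ℝ} (h0 : 0 < δ) (h1 : δ < 1) :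
    ((Finset.univ.filter fun σ : Fin k → Fin d → Bool =>
        ¬ ((1 - δ) * euclNorm v ≤ euclNorm ((signMatrix σ).mulVec v) ∧
          euclNorm ((signMatrix σ).mulVec v) ≤ (1 + δ) * euclNorm v)).card : ℝ) ≤
      2 ^ (k * d) * (2 * Real.exp (-(k * δ ^ 2 / 32))) := by
  have hk' : (0 : ℝ) < k := Nat.cast_pos.mpr hk
  rcases (Finset.sum_nonneg fun j _ => sq_nonneg (v j) :
      0 ≤ ∑ j, v j ^ 2).eq_or_lt with hU | hU
  · have hv : v = 0 := by
      ext j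
      have := (Finset.sum_eq_zero_iff_of_nonneg fun j _ => sq_nonneg (v j)).mp hU.symm j
        (Finset.mem_univ j)
      simpa using this
    have : ∀ n : ℕ, euclNorm (0 : Fin n → ℝ) = 0 := by intro n; simp [euclNorm]
    subst hv
    simp only [Matrix.mulVec_zero, this, mul_zero, le_refl, and_self, not_true_eq_false,
      Finset.filter_false, Finset.card_empty, Nat.cast_zero]
    positivity
  set U := ∑ j, v j ^ 2 with hUdef
  let Z : (Fin k → Fin d → Bool) → ℝ := fun σ => (∑ i, signSum v (σ i) ^ 2) / U
  have hN : ∀ σ : Fin k → Fin d → Bool,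
      euclNorm ((signMatrix σ).mulVec v) ^ 2 * k = Z σ * euclNorm v ^ 2 := by
    intro σ
    rw [euclNorm_signMatrix_sq, euclNorm_sq, ← hUdef]
    simp only [Z]
    field_simp
  have hv2 : 0 < euclNorm v ^ 2 := by rw [euclNorm_sq]; exact hU
  have m1 := sum_exp_rows_le_s1 k d v (δ / 16) hU (by rw [abs_of_pos (by positivity)]; linarith)
  have m2 := sum_exp_rows_le_s1 k d v (-(δ / 16)) hU
    (by rw [abs_neg, abs_of_pos (by positivity)]; linarith)
  rw [← hUdef] at m1 m2
  -- The indicator of failure is at most the sum of the two Chernoff weights.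
  have key : ∀ σ : Fin k → Fin d → Bool,
      (if ¬ ((1 - δ) * euclNorm v ≤ euclNorm ((signMatrix σ).mulVec v) ∧
          euclNorm ((signMatrix σ).mulVec v) ≤ (1 + δ) * euclNorm v) then (1 : ℝ) else 0) ≤
      Real.exp (δ / 16 * Z σ) * Real.exp (-(δ / 16 * (k * (1 + δ)))) +
        Real.exp (-(δ / 16) * Z σ) * Real.exp (δ / 16 * (k * (1 - δ))) := by
    intro σ
    rw [← Real.exp_add, ← Real.exp_add]
    have p1 := Real.exp_pos (δ / 16 * Z σ + -(δ / 16 * (k * (1 + δ))))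
    have p2 := Real.exp_pos (-(δ / 16) * Z σ + δ / 16 * (k * (1 - δ)))
    split_ifs with hbad
    · linarith
    · have hn := euclNorm_nonneg v
      have hs := euclNorm_nonneg ((signMatrix σ).mulVec v)
      rw [not_and_or, not_le, not_le] at hbad
      rcases hbad with hb | hb
      · have q : euclNorm ((signMatrix σ).mulVec v) ^ 2 ≤ ((1 - δ) * euclNorm v) ^ 2 := by
          gcongr
        have q2 : Z σ * euclNorm v ^ 2 ≤ (k * (1 - δ)) * euclNorm v ^ 2 := by
          rw [← hN]
          calc _ ≤ ((1 - δ) * euclNorm v) ^ 2 * k := by gcongr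
            _ = (k * (1 - δ)) * euclNorm v ^ 2 * (1 - δ) := by ring
            _ ≤ (k * (1 - δ)) * euclNorm v ^ 2 * 1 := by
              have : 0 ≤ 1 - δ := by linarith
              gcongr
              linarith
            _ = _ := by ring
        have q3 : Z σ ≤ k * (1 - δ) := le_of_mul_le_mul_right q2 hv2
        have : 1 ≤ Real.exp (-(δ / 16) * Z σ + δ / 16 * (k * (1 - δ))) := by
          apply Real.one_le_exp
          nlinarith
        linarith
      · have q : ((1 + δ) * euclNorm v) ^ 2 ≤ euclNorm ((signMatrix σ).mulVec v) ^ 2 := by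
          gcongr
        have q2 : (k * (1 + δ)) * euclNorm v ^ 2 ≤ Z σ * euclNorm v ^ 2 := by
          rw [← hN]
          calc _ = (k * (1 + δ)) * euclNorm v ^ 2 * 1 := by ring
            _ ≤ (k * (1 + δ)) * euclNorm v ^ 2 * (1 + δ) := by
              gcongr
              linarith
            _ = ((1 + δ) * euclNorm v) ^ 2 * k := by ring
            _ ≤ _ := by gcongr
        have q3 : k * (1 + δ) ≤ Z σ := le_of_mul_le_mul_right q2 hv2
        have : 1 ≤ Real.exp (δ / 16 * Z σ + -(δ / 16 * (k * (1 + δ)))) := by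
          apply Real.one_le_exp
          nlinarith
        linarith
  rw [Finset.card_filter, Nat.cast_sum]
  push_cast
  refine (Finset.sum_le_sum fun σ _ => key σ).trans ?_
  rw [Finset.sum_add_distrib, ← Finset.sum_mul, ← Finset.sum_mul]
  refine (add_le_add (mul_le_mul_of_nonneg_right m1 (Real.exp_pos _).le)
    (mul_le_mul_of_nonneg_right m2 (Real.exp_pos _).le)).trans (le_of_eq ?_)
  rw [mul_assoc, mul_assoc, ← Real.exp_add, ← Real.exp_add,
    show (k : ℝ) * (δ / 16 + 8 * (δ / 16) ^ 2) + -(δ / 16 * (k * (1 + δ))) =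
      -(k * δ ^ 2 / 32) by ring,
    show (k : ℝ) * (-(δ / 16) + 8 * (-(δ / 16)) ^ 2) + δ / 16 * (k * (1 - δ)) =
      -(k * δ ^ 2 / 32) by ring]
  ring

/-- **Constructive Johnson–Lindenstrauss lemma (Achlioptas sign-matrix version).**
There is a universal constant `C > 0` such that: for every finite `T ⊆ ℝ^d` with
`|T| ≥ 2`, every `0 < δ < 1`, `0 < γ < 1`, and every `k ≥ C · δ⁻² · log(|T|/γ)`,
a `k × d` matrix `S` with i.i.d. uniform entries in `{−1/√k, +1/√k}` satisfies,
with probability at least `1 − γ` (uniform counting measure over the `2^(k·d)` sign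
patterns), `(1 − δ)·‖x − y‖ ≤ ‖S(x − y)‖ ≤ (1 + δ)·‖x − y‖` for all `x, y ∈ T`. -/
theorem stmt_1 :
    ∃ C : ℝ, 0 < C ∧
      ∀ (d k : ℕ) (T : Finset (Fin d → ℝ)) (δ γ : ℝ),
        2 ≤ T.card → 0 < δ → δ < 1 → 0 < γ → γ < 1 →
        C * δ⁻¹ ^ 2 * Real.log ((T.card : ℝ) / γ) ≤ (k : ℝ) →
        1 - γ ≤
          (((Finset.univ.filter fun σ : Fin k → Fin d → Bool =>
              ∀ x ∈ T, ∀ y ∈ T,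
                (1 - δ) * euclNorm (x - y) ≤ euclNorm ((signMatrix σ).mulVec (x - y)) ∧
                  euclNorm ((signMatrix σ).mulVec (x - y)) ≤
                    (1 + δ) * euclNorm (x - y)).card : ℝ) / 2 ^ (k * d)) := by
  refine ⟨96, by norm_num, ?_⟩
  intro d k T δ γ hT h0 h1 hg0 hg1 hk
  have hn : (2 : ℝ) ≤ T.card := by exact_mod_cast hT
  have hx : 1 < (T.card : ℝ) / γ := by
    rw [lt_div_iff₀ hg0]; linarith
  have hlog := Real.log_pos hx
  have hkpos : 0 < k := by
    have : (0 : ℝ) < k := lt_of_lt_of_le (by positivity) hk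
    exact_mod_cast this
  have hexp : (T.card : ℝ) ^ 2 * (2 * Real.exp (-(k * δ ^ 2 / 32))) ≤ γ := by
    have a1 : 3 * Real.log ((T.card : ℝ) / γ) ≤ k * δ ^ 2 / 32 := by
      have := mul_le_mul_of_nonneg_right hk (sq_nonneg δ)
      have e : 96 * δ⁻¹ ^ 2 * Real.log ((T.card : ℝ) / γ) * δ ^ 2 =
          96 * Real.log ((T.card : ℝ) / γ) := by field_simp
      rw [e] at this
      linarith
    have a2 : Real.exp (-(k * δ ^ 2 / 32)) ≤ (γ / T.card) ^ 3 := by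
      calc _ ≤ Real.exp (-(3 * Real.log ((T.card : ℝ) / γ))) := by gcongr
        _ = _ := by
          rw [Real.exp_neg, show (3 : ℝ) = ((3 : ℕ) : ℝ) by norm_num, Real.exp_nat_mul,
            Real.exp_log (by linarith), ← inv_pow, inv_div]
    have hn0 : (0 : ℝ) < T.card := by linarith
    calc _ ≤ (T.card : ℝ) ^ 2 * (2 * (γ / T.card) ^ 3) := by gcongr
      _ = γ * (γ ^ 2 * (2 / T.card)) := by field_simp
      _ ≤ γ * (1 * 1) := by
        gcongr
        · exact pow_le_one₀ hg0.le hg1.le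
        · rw [div_le_one hn0]; exact hn
      _ = γ := by ring
  set good := Finset.univ.filter fun σ : Fin k → Fin d → Bool =>
    ∀ x ∈ T, ∀ y ∈ T,
      (1 - δ) * euclNorm (x - y) ≤ euclNorm ((signMatrix σ).mulVec (x - y)) ∧
        euclNorm ((signMatrix σ).mulVec (x - y)) ≤ (1 + δ) * euclNorm (x - y) with hgood
  let bad : (Fin d → ℝ) × (Fin d → ℝ) → Finset (Fin k → Fin d → Bool) := fun p =>
    Finset.univ.filter fun σ =>
      ¬ ((1 - δ) * euclNorm (p.1 - p.2) ≤ euclNorm ((signMatrix σ).mulVec (p.1 - p.2)) ∧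
        euclNorm ((signMatrix σ).mulVec (p.1 - p.2)) ≤ (1 + δ) * euclNorm (p.1 - p.2))
  have hcover : (Finset.univ : Finset (Fin k → Fin d → Bool)) ⊆
      good ∪ (T ×ˢ T).biUnion bad := by
    intro σ _
    by_cases hσ : σ ∈ good
    · exact Finset.mem_union_left _ hσ
    · apply Finset.mem_union_right
      rw [hgood, Finset.mem_filter] at hσ
      push Not at hσ
      obtain ⟨x, hx, y, hy, h⟩ := hσ (Finset.mem_univ _)
      refine Finset.mem_biUnion.mpr ⟨(x, y), Finset.mk_mem_product hx hy, ?_⟩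
      refine Finset.mem_filter.mpr ⟨Finset.mem_univ _, fun hc => ?_⟩
      exact absurd hc.2 (not_le.mpr (h hc.1))
  have hcard : (2 : ℝ) ^ (k * d) ≤ good.card + ∑ p ∈ T ×ˢ T, ((bad p).card : ℝ) := by
    have c1 := (Finset.card_le_card hcover).trans ((Finset.card_union_le _ _).trans
      (Nat.add_le_add_left Finset.card_biUnion_le _))
    have c2 : (Finset.univ : Finset (Fin k → Fin d → Bool)).card = 2 ^ (k * d) := by
      simp [← pow_mul, mul_comm]
    rw [c2] at c1
    exact_mod_cast c1
  have hbad : ∑ p ∈ T ×ˢ T, ((bad p).card : ℝ) ≤ 2 ^ (k * d) * γ := by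
    calc _ ≤ ∑ _p ∈ T ×ˢ T, (2 : ℝ) ^ (k * d) * (2 * Real.exp (-(k * δ ^ 2 / 32))) :=
          Finset.sum_le_sum fun p _ => card_bad_le hkpos (p.1 - p.2) h0 h1
      _ = 2 ^ (k * d) * ((T.card : ℝ) ^ 2 * (2 * Real.exp (-(k * δ ^ 2 / 32)))) := by
          rw [Finset.sum_const, Finset.card_product, nsmul_eq_mul]
          push_cast
          ring
      _ ≤ _ := by gcongr
  rw [le_div_iff₀ (by positivity)]
  linarith
end

section
/- Corollary of the main theorem (√δ to δ reduction): there exists a universal constant C > 0 such that the following holds. Let T ⊆ ℝ^d be a finite set with |T| ≥ 2, let 0 < δ ≤ 1, and let P ∈ ℝ^{s×d} be a matrix with orthonormal rows (P·Pᵀ = I_s) that has distortion at most √δ on T. Then, with k = ⌈C · log |T| / δ⌉ and r = s + k, there exists a matrix Π ∈ ℝ^{r×d} such that for all distinct x, y ∈ T, (1 − δ)·‖x − y‖ ≤ ‖Π(x − y)‖ ≤ (1 + δ)·‖x − y‖. -/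
/-!
Let `Q = 1 - Pᵀ P`, the orthogonal projection onto the kernel of `P`, so that
`‖z‖² = ‖P z‖² + ‖Q z‖²` for every `z`. If `z = x - y` is a difference of points of `T`, the lower
bound `‖P z‖ ≥ (1 - √δ) ‖z‖` leaves a small residual: `‖Q z‖² ≤ 2 √δ ‖z‖²`. It is therefore enough
to estimate `‖Q z‖²` with relative error `√δ / 2`, as this amounts to an error `δ ‖z‖²`
(`distortion_of_sq`). By the Johnson–Lindenstrauss lemma (`exists_rows`), a matrix `G / √k` with
independent Gaussian entries does this for all residuals simultaneously, with `k` of order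
`log |T| / (√δ)² = log |T| / δ`. The map sought is `P` stacked on `G Q / √k`.

The Johnson–Lindenstrauss lemma is obtained from the exact exponential moment of the square of a
Gaussian variable (`integral_exp_sq_gaussianReal`): if the sum over all vectors and both tails of
the Chernoff integrands has expectation below `1`, some `G` makes each of them below `1`.
-/

open scoped BigOperators

/-- A matrix `M ∈ ℝ^{r×d}` has distortion at most `δ` on a finite set `T ⊆ ℝ^d` if for
all distinct `x, y ∈ T`, `(1 − δ)·‖x − y‖ ≤ ‖M(x − y)‖ ≤ (1 + δ)·‖x − y‖`. -/
def HasDistortionOn {r d : ℕ} (M : Matrix (Fin r) (Fin d) ℝ) (δ : ℝ)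
    (T : Finset (Fin d → ℝ)) : Prop :=
  ∀ x ∈ T, ∀ y ∈ T, x ≠ y →
    (1 - δ) * euclNorm (x - y) ≤ euclNorm (M.mulVec (x - y)) ∧
      euclNorm (M.mulVec (x - y)) ≤ (1 + δ) * euclNorm (x - y)

open MeasureTheory ProbabilityTheory

/-! ### Exponential moments of squared Gaussians -/

/-- Applied with `u = 2 * l`, this turns the exact Gaussian value `(1 - 2 * l)^(-1/2)` into an
exponential bound valid for both signs of `l`, hence for both tails. -/
theorem exp_le_one_sub {u : ℝ} (hu : |u| ≤ 1 / 5) : Real.exp (-(u + 2 * u ^ 2)) ≤ 1 - u := by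
  obtain ⟨h1, h2⟩ := abs_le.mp hu
  have hw : |(-(u + 2 * u ^ 2))| ≤ 1 := abs_le.mpr ⟨by nlinarith, by nlinarith⟩
  have h := (abs_le.mp (Real.abs_exp_sub_one_sub_id_le hw)).2
  have h4 : (1 + 2 * u) ^ 2 ≤ 2 := by nlinarith
  nlinarith [mul_le_mul_of_nonneg_left h4 (sq_nonneg u)]

/-- The moment generating function at `l` of a chi-squared variable with one degree of freedom. -/
theorem integral_exp_sq_gaussianReal {l : ℝ} (hl : |l| ≤ 1 / 10) :
    ∫ x, Real.exp (l * x ^ 2) ∂gaussianReal 0 1 = √(1 / (1 - 2 * l)) := by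
  obtain ⟨h1, h2⟩ := abs_le.mp hl
  rw [integral_gaussianReal_eq_integral_smul one_ne_zero]
  have : ∀ x : ℝ, gaussianPDFReal 0 1 x • Real.exp (l * x ^ 2)
      = (√(2 * Real.pi))⁻¹ * Real.exp (-(1 / 2 - l) * x ^ 2) := by
    intro x
    simp only [gaussianPDFReal, NNReal.coe_one, mul_one, sub_zero, smul_eq_mul]
    rw [mul_assoc, ← Real.exp_add]
    ring_nf
  simp_rw [this]
  rw [integral_const_mul, integral_gaussian, ← Real.sqrt_inv, ← Real.sqrt_mul (by positivity)]
  congr 1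
  have : (1 - 2 * l) ≠ 0 := by linarith
  have : (1 / 2 - l) ≠ 0 := by intro h; apply this; linarith
  have := Real.pi_ne_zero
  field_simp

theorem integral_exp_sq_gaussianReal_le {l : ℝ} (hl : |l| ≤ 1 / 10) :
    ∫ x, Real.exp (l * x ^ 2) ∂gaussianReal 0 1 ≤ Real.exp (l + 4 * l ^ 2) := by
  rw [integral_exp_sq_gaussianReal hl]
  obtain ⟨h1, h2⟩ := abs_le.mp hl
  have h := exp_le_one_sub (u := 2 * l) (abs_le.mpr ⟨by linarith, by linarith⟩)
  apply Real.sqrt_le_iff.mpr ⟨by positivity, ?_⟩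
  rw [← Real.exp_nat_mul, one_div]
  refine (inv_anti₀ (Real.exp_pos _) h).trans_eq ?_
  rw [← Real.exp_neg]
  congr 1
  push_cast
  ring

/-- Rotation invariance: every one-dimensional marginal of the standard Gaussian in a unit direction
is a standard real Gaussian. -/
theorem map_inner_stdGaussian {d : ℕ} {v : EuclideanSpace ℝ (Fin d)} (hv : ‖v‖ = 1) :
    (stdGaussian (EuclideanSpace ℝ (Fin d))).map (fun g => inner ℝ v g) = gaussianReal 0 1 := by
  have h := IsGaussian.map_eq_gaussianReal (μ := stdGaussian (EuclideanSpace ℝ (Fin d))) (innerSL ℝ v)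
  rw [integral_strongDual_stdGaussian, variance_dual_stdGaussian] at h
  simpa [hv] using h

/-- For `k` independent standard Gaussian rows `g i` and a unit vector `v`, the sum
`∑ i, ⟪v, g i⟫ ^ 2` is chi-squared with `k` degrees of freedom, so its exponential moment is the
`k`-th power of the one-dimensional one. -/
theorem integral_exp_rows {d : ℕ} {k : ℕ} {v : EuclideanSpace ℝ (Fin d)} (hv : ‖v‖ = 1)
    {l : ℝ} (hl : |l| ≤ 1 / 10) :
    Integrable (fun g : Fin k → EuclideanSpace ℝ (Fin d) => Real.exp (l * ∑ i, (inner ℝ v (g i)) ^ 2))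
        (Measure.pi fun _ => stdGaussian (EuclideanSpace ℝ (Fin d))) ∧
      ∫ g : Fin k → EuclideanSpace ℝ (Fin d), Real.exp (l * ∑ i, (inner ℝ v (g i)) ^ 2)
        ∂(Measure.pi fun _ => stdGaussian (EuclideanSpace ℝ (Fin d))) ≤
        Real.exp (k * (l + 4 * l ^ 2)) := by
  have key : ∫ g : Fin k → EuclideanSpace ℝ (Fin d), Real.exp (l * ∑ i, (inner ℝ v (g i)) ^ 2)
      ∂(Measure.pi fun _ => stdGaussian (EuclideanSpace ℝ (Fin d)))
      = (∫ x, Real.exp (l * x ^ 2) ∂gaussianReal 0 1) ^ k := by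
    simp_rw [Finset.mul_sum, Real.exp_sum]
    rw [integral_fintype_prod_eq_pow
        (fun g : EuclideanSpace ℝ (Fin d) => Real.exp (l * (inner ℝ v g) ^ 2)),
      Fintype.card_fin, ← map_inner_stdGaussian hv, integral_map (by fun_prop) (by fun_prop)]
  constructor
  -- A non-integrable function would have integral `0`.
  · apply Integrable.of_integral_ne_zero
    rw [key, integral_exp_sq_gaussianReal hl]
    have : 0 < 1 - 2 * l := by linarith [(abs_le.mp hl).2]
    positivity
  · rw [key, Real.exp_nat_mul]
    exact pow_le_pow_left₀ (integral_nonneg fun _ => (Real.exp_pos _).le)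
      (integral_exp_sq_gaussianReal_le hl) k

/-! ### The Johnson–Lindenstrauss lemma -/

/-- The Johnson–Lindenstrauss lemma for unit vectors, without the normalisation `1 / √k`: the
hypothesis `hk` is the union bound over the two tails of each `v ∈ S`, via Chernoff bounds at
`l = ± ε / 8`. -/
theorem exists_rows_of_unit {d : ℕ} {k : ℕ} (S : Finset (EuclideanSpace ℝ (Fin d)))
    (hS : ∀ v ∈ S, ‖v‖ = 1) {ε : ℝ}
    (hε : 0 < ε) (hε' : ε ≤ 1 / 2) (hk : 2 * S.card * Real.exp (-(k * ε ^ 2 / 16)) < 1) :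
    ∃ g : Fin k → EuclideanSpace ℝ (Fin d), ∀ v ∈ S, |∑ i, (inner ℝ v (g i)) ^ 2 - k| ≤ k * ε := by
  set μ : Measure (Fin k → EuclideanSpace ℝ (Fin d)) :=
    Measure.pi fun _ => stdGaussian (EuclideanSpace ℝ (Fin d))
  -- `F l v g ≥ 1` says that the sum is at least `k (1 + ε)` if `0 < l`, at most `k (1 - ε)` if `l < 0`.
  let F : ℝ → (EuclideanSpace ℝ (Fin d)) → (Fin k → EuclideanSpace ℝ (Fin d)) → ℝ := fun l v g =>
    Real.exp (-(k * (l + |l| * ε))) * Real.exp (l * ∑ i, (inner ℝ v (g i)) ^ 2)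
  have hF : ∀ l, |l| = ε / 8 → ∀ v ∈ S, Integrable (F l v) μ ∧
      ∫ g, F l v g ∂μ ≤ Real.exp (-(k * ε ^ 2 / 16)) := by
    intro l hl v hv
    obtain ⟨h1, h2⟩ := integral_exp_rows (k := k) (hS v hv) (l := l) (by rw [hl]; linarith)
    refine ⟨h1.const_mul _, ?_⟩
    simp only [F]
    rw [integral_const_mul]
    refine (mul_le_mul_of_nonneg_left h2 (Real.exp_pos _).le).trans_eq ?_
    rw [← Real.exp_add, ← sq_abs l, hl]
    congr 1
    ring
  have ha : |ε / 8| = ε / 8 := abs_of_pos (by positivity)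
  have ha' : |(-(ε / 8))| = ε / 8 := by rw [abs_neg, ha]
  have hint : Integrable (fun g => ∑ v ∈ S, (F (ε / 8) v g + F (-(ε / 8)) v g)) μ :=
    integrable_finsetSum _ fun v hv => (hF _ ha v hv).1.add (hF _ ha' v hv).1
  have hlt : ∫ g, ∑ v ∈ S, (F (ε / 8) v g + F (-(ε / 8)) v g) ∂μ < 1 := by
    rw [integral_finsetSum S (f := fun v g => F (ε / 8) v g + F (-(ε / 8)) v g)
      fun v hv => (hF _ ha v hv).1.add (hF _ ha' v hv).1]
    refine (Finset.sum_le_card_nsmul S _ (2 * Real.exp (-(k * ε ^ 2 / 16))) ?_).trans_lt ?_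
    · intro v hv
      rw [integral_add (hF _ ha v hv).1 (hF _ ha' v hv).1]
      linarith [(hF _ ha v hv).2, (hF _ ha' v hv).2]
    · rw [nsmul_eq_mul]; linarith
  -- A point where the sum is below `1` makes every summand below `1`, so no tail event occurs.
  obtain ⟨g, hg⟩ := exists_le_integral hint
  refine ⟨g, fun v hv => ?_⟩
  have hpos : ∀ l v, 0 < F l v g := fun l v => by positivity
  have h1 : F (ε / 8) v g + F (-(ε / 8)) v g < 1 :=
    (Finset.single_le_sum (f := fun v => F (ε / 8) v g + F (-(ε / 8)) v g)
      (fun v _ => (add_pos (hpos _ v) (hpos _ v)).le) hv).trans_lt (hg.trans_lt hlt)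
  have hlog : ∀ l, F l v g < 1 → -(k * (l + |l| * ε)) + l * ∑ i, (inner ℝ v (g i)) ^ 2 < 0 := by
    intro l h
    simp only [F] at h
    rwa [← Real.exp_add, Real.exp_lt_one_iff] at h
  have h2 := hlog (ε / 8) (by linarith [hpos (-(ε / 8)) v])
  have h3 := hlog (-(ε / 8)) (by linarith [hpos (ε / 8) v])
  rw [ha] at h2
  rw [ha'] at h3
  rw [abs_le]
  constructor <;> nlinarith

/-- The Johnson–Lindenstrauss lemma for arbitrary vectors, by rescaling to the unit sphere. -/
theorem exists_rows {d : ℕ} {k : ℕ} (S : Finset (EuclideanSpace ℝ (Fin d))) {ε : ℝ}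
    (hε : 0 < ε) (hε' : ε ≤ 1 / 2) (hk : 2 * S.card * Real.exp (-(k * ε ^ 2 / 16)) < 1) :
    ∃ g : Fin k → EuclideanSpace ℝ (Fin d), ∀ v ∈ S,
      |∑ i, (inner ℝ v (g i)) ^ 2 - k * ‖v‖ ^ 2| ≤ k * ε * ‖v‖ ^ 2 := by
  classical
  let U := (S.filter (· ≠ 0)).image fun v => ‖v‖⁻¹ • v
  have hU : U.card ≤ S.card := Finset.card_image_le.trans (Finset.card_filter_le _ _)
  obtain ⟨g, hg⟩ := exists_rows_of_unit (k := k) U (fun u hu => by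
      obtain ⟨v, hv, rfl⟩ := Finset.mem_image.mp hu
      exact norm_smul_inv_norm (𝕜 := ℝ) (Finset.mem_filter.mp hv).2) hε hε'
    (lt_of_le_of_lt (by gcongr) hk)
  refine ⟨g, fun v hv => ?_⟩
  by_cases h0 : v = 0
  · simp [h0]
  have h := hg _ (Finset.mem_image_of_mem _ (Finset.mem_filter.mpr ⟨hv, h0⟩))
  have hn : 0 < ‖v‖ := norm_pos_iff.mpr h0
  have hs : ∑ i, (inner ℝ v (g i)) ^ 2 - k * ‖v‖ ^ 2
      = ‖v‖ ^ 2 * (∑ i, (inner ℝ (‖v‖⁻¹ • v) (g i)) ^ 2 - k) := by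
    simp_rw [real_inner_smul_left, mul_pow]
    rw [← Finset.mul_sum]
    field_simp
  rw [hs, abs_mul, abs_of_nonneg (sq_nonneg _)]
  nlinarith [mul_le_mul_of_nonneg_left h (sq_nonneg ‖v‖)]

/-! ### Sketching the residual -/

theorem euclNorm_eq {n : ℕ} (v : Fin n → ℝ) : euclNorm v = √(v ⬝ᵥ v) := by
  simp [euclNorm, dotProduct, sq]

/-- Pythagoras: since `P` has orthonormal rows, `1 - Pᵀ P` is the orthogonal projection onto the
kernel of `P`. -/
theorem dotProduct_residual {s d : ℕ} {P : Matrix (Fin s) (Fin d) ℝ} (hP : P * P.transpose = 1)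
    (z : Fin d → ℝ) :
    ((1 - P.transpose * P).mulVec z) ⬝ᵥ ((1 - P.transpose * P).mulVec z)
      = z ⬝ᵥ z - P.mulVec z ⬝ᵥ P.mulVec z := by
  have h1 : ∀ (x : Fin d → ℝ) (w : Fin s → ℝ),
      x ⬝ᵥ P.transpose.mulVec w = P.mulVec x ⬝ᵥ w := by
    intro x w
    rw [Matrix.dotProduct_mulVec, Matrix.vecMul_transpose]
  rw [Matrix.sub_mulVec, Matrix.one_mulVec, ← Matrix.mulVec_mulVec, sub_dotProduct,
    dotProduct_sub, dotProduct_sub, dotProduct_comm (P.transpose.mulVec _) z, h1, h1,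
    Matrix.mulVec_mulVec, hP, Matrix.one_mulVec]
  ring

/-- The scalar step. Here `a = ‖z‖ ^ 2`, `p = ‖P z‖ ^ 2`, the residual has squared norm `a - p`, and
`b` approximates it with relative error `√δ / 2`. The lower distortion bound gives
`a - p ≤ 2 √δ a`, so the absolute error is only `δ a`; this is where `√δ` improves to `δ`. -/
theorem distortion_of_sq {a p b δ : ℝ} (ha : 0 ≤ a) (hp : 0 ≤ p) (hδ : 0 < δ)
    (hδ' : δ ≤ 1) (h : (1 - √δ) * √a ≤ √p) (hb : |b - (a - p)| ≤ √δ / 2 * (a - p)) :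
    (1 - δ) * √a ≤ √(p + b) ∧ √(p + b) ≤ (1 + δ) * √a := by
  have ht : √δ ≤ 1 := Real.sqrt_le_one.mpr hδ'
  have ht0 : 0 ≤ √δ := Real.sqrt_nonneg _
  have hts : √δ ^ 2 = δ := Real.sq_sqrt hδ.le
  have h1 : (1 - √δ) ^ 2 * a ≤ p := by
    have := pow_le_pow_left₀ (mul_nonneg (by linarith) (Real.sqrt_nonneg _)) h 2
    rwa [mul_pow, Real.sq_sqrt ha, Real.sq_sqrt hp] at this
  have h2 : a - p ≤ 2 * √δ * a := by nlinarith [mul_nonneg (sq_nonneg (√δ)) ha]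
  have h3 : √δ / 2 * (a - p) ≤ δ * a := by
    calc √δ / 2 * (a - p) ≤ √δ / 2 * (2 * √δ * a) := by gcongr
      _ = √δ ^ 2 * a := by ring
      _ = δ * a := by rw [hts]
  obtain ⟨h4, h5⟩ := abs_le.mp hb
  constructor
  · apply Real.le_sqrt_of_sq_le
    rw [mul_pow, Real.sq_sqrt ha]
    nlinarith [mul_nonneg (mul_nonneg hδ.le (sub_nonneg.mpr hδ')) ha]
  · apply Real.sqrt_le_iff.mpr ⟨by positivity, ?_⟩
    rw [mul_pow, Real.sq_sqrt ha]
    nlinarith [mul_nonneg hδ.le ha, mul_nonneg (sq_nonneg δ) ha]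

/-- The constant `256` suffices: `m ≤ N ^ 2` difference vectors, each with failure probability at
most `2 / N ^ 4`. -/
theorem union_bound {N k m : ℕ} {δ : ℝ} (hN : 2 ≤ N) (hδ : 0 < δ) (hm : m ≤ N * N)
    (hk : 256 * Real.log N / δ ≤ k) :
    2 * (m : ℝ) * Real.exp (-(k * (√δ / 2) ^ 2 / 16)) < 1 := by
  have hN' : (2 : ℝ) ≤ N := by exact_mod_cast hN
  have hN0 : (0 : ℝ) < N := by linarith
  have hm' : (m : ℝ) ≤ N * N := by exact_mod_cast hm
  have h1 : 4 * Real.log N ≤ k * (√δ / 2) ^ 2 / 16 := by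
    rw [div_pow, Real.sq_sqrt hδ.le]
    rw [div_le_iff₀ hδ] at hk
    linarith
  have h2 : Real.exp (-(k * (√δ / 2) ^ 2 / 16)) ≤ ((N : ℝ) ^ 4)⁻¹ := by
    refine (Real.exp_le_exp.mpr (neg_le_neg h1)).trans_eq ?_
    rw [Real.exp_neg, show (4 : ℝ) = ((4 : ℕ) : ℝ) by norm_num, Real.exp_nat_mul,
      Real.exp_log hN0]
  calc 2 * (m : ℝ) * Real.exp (-(k * (√δ / 2) ^ 2 / 16))
      ≤ 2 * (N * N) * ((N : ℝ) ^ 4)⁻¹ := by gcongr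
    _ = 2 / (N : ℝ) ^ 2 := by field_simp
    _ < 1 := by rw [div_lt_one (by positivity)]; nlinarith

/-- **Corollary of the main theorem (√δ to δ reduction).**
There is a universal constant `C > 0` such that: for every finite `T ⊆ ℝ^d` with
`|T| ≥ 2`, every `0 < δ ≤ 1`, and every `P ∈ ℝ^{s×d}` with orthonormal rows
(`P·Pᵀ = I_s`) and distortion at most `√δ` on `T`, with `k = ⌈C · log |T| / δ⌉` and
`r = s + k` there exists `Π ∈ ℝ^{r×d}` with distortion at most `δ` on `T`. -/
theorem stmt_10 :
    ∃ C : ℝ, 0 < C ∧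
      ∀ (d s : ℕ) (T : Finset (Fin d → ℝ)) (P : Matrix (Fin s) (Fin d) ℝ) (δ : ℝ),
        2 ≤ T.card → 0 < δ → δ ≤ 1 → P * P.transpose = 1 →
        HasDistortionOn P (Real.sqrt δ) T →
        ∃ M : Matrix (Fin (s + ⌈C * Real.log (T.card : ℝ) / δ⌉₊)) (Fin d) ℝ,
          HasDistortionOn M δ T := by
  refine ⟨256, by norm_num, fun d s T P δ hT hδ hδ' hP hPT => ?_⟩
  classical
  have hlog : 0 < Real.log (T.card : ℝ) := Real.log_pos (by exact_mod_cast hT)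
  have hk0 : 0 < ⌈256 * Real.log (T.card : ℝ) / δ⌉₊ := Nat.ceil_pos.mpr (by positivity)
  have hk := Nat.le_ceil (256 * Real.log (T.card : ℝ) / δ)
  set k := ⌈256 * Real.log (T.card : ℝ) / δ⌉₊
  have hkR : (0 : ℝ) < k := by exact_mod_cast hk0
  set Q : Matrix (Fin d) (Fin d) ℝ := 1 - P.transpose * P with hQ
  let S : Finset (EuclideanSpace ℝ (Fin d)) :=
    (T ×ˢ T).image fun x => WithLp.toLp 2 (Q.mulVec (x.1 - x.2))
  have hS : S.card ≤ T.card * T.card := Finset.card_image_le.trans_eq (Finset.card_product _ _)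
  have ht : √δ ≤ 1 := Real.sqrt_le_one.mpr hδ'
  obtain ⟨g, hg⟩ := exists_rows (k := k) S (ε := √δ / 2) (by positivity) (by linarith)
    (union_bound hT hδ hS hk)
  let B : Matrix (Fin k) (Fin d) ℝ := (√(k : ℝ))⁻¹ • (Matrix.of (fun i j => g i j) * Q)
  -- `M` stacks `P` on top of the sketch `B` of the residual.
  refine ⟨Matrix.of (Fin.append (fun i => P i) fun i => B i), fun x hx y hy hxy => ?_⟩
  set z := x - y with hz
  have hM : (Matrix.of (Fin.append (fun i => P i) fun i => B i)).mulVec z ⬝ᵥ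
        (Matrix.of (Fin.append (fun i => P i) fun i => B i)).mulVec z
      = P.mulVec z ⬝ᵥ P.mulVec z + B.mulVec z ⬝ᵥ B.mulVec z := by
    simp [dotProduct, Fin.sum_univ_add, Matrix.mulVec]
  have hq := dotProduct_residual hP z
  rw [← hQ] at hq
  have hnn : ∀ {n : ℕ} (v : Fin n → ℝ), 0 ≤ v ⬝ᵥ v := fun v =>
    Finset.sum_nonneg fun i _ => mul_self_nonneg (v i)
  have hgz := hg (WithLp.toLp 2 (Q.mulVec z))
    (Finset.mem_image_of_mem (fun x : (Fin d → ℝ) × (Fin d → ℝ) =>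
      (WithLp.toLp 2 (Q.mulVec (x.1 - x.2)) : EuclideanSpace ℝ (Fin d)))
      (Finset.mk_mem_product hx hy))
  have hnorm : ‖(WithLp.toLp 2 (Q.mulVec z) : EuclideanSpace ℝ (Fin d))‖ ^ 2
      = Q.mulVec z ⬝ᵥ Q.mulVec z := by
    rw [EuclideanSpace.real_norm_sq_eq]
    simp [dotProduct, sq]
  have hB : B.mulVec z ⬝ᵥ B.mulVec z = (k : ℝ)⁻¹ *
      ∑ i, (inner ℝ (WithLp.toLp 2 (Q.mulVec z) : EuclideanSpace ℝ (Fin d)) (g i)) ^ 2 := by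
    have : ∀ i, inner ℝ (WithLp.toLp 2 (Q.mulVec z) : EuclideanSpace ℝ (Fin d)) (g i)
        = ((Matrix.of (fun i j => g i j) : Matrix (Fin k) (Fin d) ℝ).mulVec (Q.mulVec z)) i := by
      intro i
      simp [PiLp.inner_apply, Matrix.mulVec, dotProduct]
    simp_rw [this, B, Matrix.smul_mulVec, smul_dotProduct, dotProduct_smul,
      ← Matrix.mulVec_mulVec, smul_eq_mul]
    rw [← mul_assoc, ← mul_inv, Real.mul_self_sqrt hkR.le]
    simp [dotProduct, sq]
  simp only [euclNorm_eq, hM]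
  refine distortion_of_sq (hnn z) (hnn _) hδ hδ' ?_ ?_
  · simpa only [euclNorm_eq] using (hPT x hx y hy hxy).1
  · rw [← hq, hB]
    rw [hnorm] at hgz
    rw [show ∀ A q : ℝ, (k : ℝ)⁻¹ * A - q = (k : ℝ)⁻¹ * (A - k * q) by intros; field_simp,
      abs_mul, abs_of_pos (inv_pos.mpr hkR), inv_mul_le_iff₀ hkR]
    linarith
end
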